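/- arXiv:math/0512624 — 12 statements merged into one kernel-verified Lean document; each statement's English description precedes it below -/
import Mathlib

section
/- For every natural number n, every real λ with 0 < λ < 1, and every real z ≥ 0, the series (-1)^n · Σ_{k=0}^∞ λ^{n+k} · C(n+k, k) · L_{n+k}(z/λ) converges and equals (1/(1-λ)) · (-λ/(1-λ))^n · L_n(z/(λ(1-λ))) · exp(-z/(1-λ)), where C(n+k,k) is the binomial coefficient. -/
open Filter Topology

/-- The `n`-th Laguerre polynomial, `L n x = ∑_{j=0}^n (-1)^j C(n,j) x^j / j!`. -/
noncomputable def laguerre (n : ℕ) (x : ℝ) : ℝ :=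
  ∑ j ∈ Finset.range (n + 1), (-1 : ℝ) ^ j * (n.choose j) * x ^ j / (j.factorial)

theorem hasSum_of_eq {f g : ℕ → ℝ} {s r : ℝ} (h : HasSum g r) (hf : ∀ i, f i = g i)
    (hs : s = r) : HasSum f s := by
  rw [hs, funext hf]; exact h

/-- Riordan's product identity for binomial coefficients. -/
theorem riordan_aux (n j c : ℕ) :
    ∑ b ∈ Finset.range (n + 1), n.choose b * j.choose b * b.choose c
      = n.choose c * (n + j - c).choose n := by
  rcases Nat.lt_or_ge n c with h | h
  · rw [Nat.choose_eq_zero_of_lt h, zero_mul]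
    apply Finset.sum_eq_zero
    intro b hb
    rw [Nat.choose_eq_zero_of_lt (show b < c by rw [Finset.mem_range] at hb; omega), mul_zero]
  · have e : n + j - c = j + (n - c) := by omega
    rw [e, Nat.add_choose_eq, Finset.Nat.sum_antidiagonal_eq_sum_range_succ_mk, Finset.mul_sum]
    apply Finset.sum_congr rfl
    intro b hb
    rw [Finset.mem_range] at hb
    simp only
    rcases Nat.lt_or_ge b c with h2 | h2
    · rw [Nat.choose_eq_zero_of_lt h2, Nat.choose_eq_zero_of_lt (show n - c < n - b by omega)]
      simp
    · have h3 := Nat.choose_mul (n := n) (k := b) (s := c) h2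
      have h4 : (n - c).choose (b - c) = (n - c).choose (n - b) := by
        rw [← Nat.choose_symm (show b - c ≤ n - c by omega)]
        congr 1
        omega
      rw [h4] at h3
      calc n.choose b * j.choose b * b.choose c = (n.choose b * b.choose c) * j.choose b := by ring
        _ = _ := by rw [h3]; ring

theorem vand (a b k N : ℕ) (hN : b ≤ N) :
    (a + b).choose k = ∑ c ∈ Finset.range (N + 1), if c ≤ k then b.choose c * a.choose (k - c) else 0 := by
  have h1 : (a + b).choose k = ∑ c ∈ Finset.range (k + 1), b.choose c * a.choose (k - c) := by
    rw [add_comm a b, Nat.add_choose_eq, Finset.Nat.sum_antidiagonal_eq_sum_range_succ_mk]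
  rw [h1, ← Finset.sum_filter]
  symm
  apply Finset.sum_subset_zero_on_sdiff
  · intro c hc
    simp at hc ⊢
    omega
  · intro c hc
    simp at hc
    rw [Nat.choose_eq_zero_of_lt (show b < c by by_contra; omega), zero_mul]
  · intros; rfl

theorem riordan (m n j : ℕ) :
    m.choose n * m.choose j
      = ∑ b ∈ Finset.range (n + 1), n.choose b * j.choose b * (m + b).choose (n + j) := by
  have h : ∀ b ∈ Finset.range (n + 1), n.choose b * j.choose b * (m + b).choose (n + j)
      = ∑ c ∈ Finset.range (n + 1),
        (n.choose b * j.choose b * b.choose c) * m.choose (n + j - c) := by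
    intro b hb
    rw [Finset.mem_range] at hb
    rw [vand m b (n + j) n (by omega), Finset.mul_sum]
    apply Finset.sum_congr rfl
    intro c hc
    rw [Finset.mem_range] at hc
    rw [if_pos (by omega)]
    ring
  rw [Finset.sum_congr rfl h, Finset.sum_comm]
  simp_rw [← Finset.sum_mul, riordan_aux]
  rcases Nat.lt_or_ge m n with hm | hm
  · rw [Nat.choose_eq_zero_of_lt hm, zero_mul]
    symm
    apply Finset.sum_eq_zero
    intro c hc
    rcases Nat.lt_or_ge (n + j - c) n with h1 | h1
    · rw [Nat.choose_eq_zero_of_lt h1]; simp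
    · rw [Nat.choose_eq_zero_of_lt (show m < n + j - c by omega)]; simp
  · have e : m.choose j = ((m - n) + n).choose j := by congr 1; omega
    rw [e, vand (m - n) n j n le_rfl, Finset.mul_sum]
    apply Finset.sum_congr rfl
    intro c hc
    rw [Finset.mem_range] at hc
    split_ifs with hcj
    · rcases Nat.lt_or_ge m (n + j - c) with h1 | h1
      · rw [Nat.choose_eq_zero_of_lt h1, Nat.choose_eq_zero_of_lt (show m - n < j - c by omega)]
        simp
      · have h3 := Nat.choose_mul (n := m) (k := n + j - c) (s := n) (by omega)
        have e2 : n + j - c - n = j - c := by omega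
        rw [e2] at h3
        calc _ = n.choose c * (m.choose n * (m - n).choose (j - c)) := by ring
          _ = _ := by rw [← h3]; ring
    · rw [Nat.choose_eq_zero_of_lt (show n + j - c < n by omega)]; simp

theorem hasSum_shift (f : ℕ → ℝ) (d : ℕ) (s : ℝ) (h0 : ∀ m < d, f m = 0)
    (h : HasSum (fun i => f (i + d)) s) : HasSum f s := by
  have := (hasSum_nat_add_iff (f := f) d).1 h
  rwa [Finset.sum_eq_zero (fun i hi => h0 i (Finset.mem_range.1 hi)), add_zero] at this

theorem hasSum_choose (t : ℝ) (h0 : 0 < t) (h1 : t < 1) (N b : ℕ) (hb : b ≤ N) :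
    HasSum (fun m : ℕ => ((m + b).choose N : ℝ) * t ^ m) (t ^ (N - b) / (1 - t) ^ (N + 1)) := by
  apply hasSum_shift _ (N - b)
  · intro m hm
    rw [Nat.choose_eq_zero_of_lt (by omega)]
    simp
  · have := (hasSum_choose_mul_geometric_of_norm_lt_one (𝕜 := ℝ) N (r := t)
      (by rw [Real.norm_eq_abs, abs_of_pos h0]; exact h1)).mul_left (t ^ (N - b))
    refine hasSum_of_eq this (fun i => ?_) ?_
    · rw [show i + (N - b) + b = i + N by omega, pow_add]
      ring
    · ring

/-- The value of `∑ m, C(m,n) C(m,j) t^m`. -/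
noncomputable def colSum (t : ℝ) (n j : ℕ) : ℝ :=
  ∑ b ∈ Finset.range (n + 1), (n.choose b : ℝ) * j.choose b *
    (t ^ (n - b + j) / (1 - t) ^ (n + j + 1))

theorem hasSum_colSum (t : ℝ) (h0 : 0 < t) (h1 : t < 1) (n j : ℕ) :
    HasSum (fun m : ℕ => (m.choose n : ℝ) * m.choose j * t ^ m) (colSum t n j) := by
  have : ∀ b ∈ Finset.range (n + 1), HasSum (fun m : ℕ => (n.choose b : ℝ) * j.choose b *
      (((m + b).choose (n + j) : ℝ) * t ^ m)) ((n.choose b : ℝ) * j.choose b *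
    (t ^ (n - b + j) / (1 - t) ^ (n + j + 1))) := by
    intro b hb
    rw [Finset.mem_range] at hb
    apply HasSum.mul_left
    have := hasSum_choose t h0 h1 (n + j) b (by omega)
    rwa [show n + j - b = n - b + j by omega] at this
  refine hasSum_of_eq (hasSum_sum this) (fun m => ?_) rfl
  have := congrArg (Nat.cast (R := ℝ)) (riordan m n j)
  push_cast at this
  rw [this, Finset.sum_mul]
  apply Finset.sum_congr rfl
  intros; ring

theorem hasSum_row (t : ℝ) (h0 : 0 < t) (h1 : t < 1) (n : ℕ) (y : ℝ) :
    HasSum (fun j : ℕ => colSum t n j * (y ^ j / j.factorial))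
      (∑ b ∈ Finset.range (n + 1), (n.choose b : ℝ) * (y ^ b / b.factorial) *
        (t ^ n / (1 - t) ^ (n + b + 1)) * Real.exp (y * t / (1 - t))) := by
  have ht : 1 - t ≠ 0 := by linarith
  have : ∀ b ∈ Finset.range (n + 1), HasSum (fun j : ℕ => (n.choose b : ℝ) * j.choose b *
      (t ^ (n - b + j) / (1 - t) ^ (n + j + 1)) * (y ^ j / j.factorial))
      ((n.choose b : ℝ) * (y ^ b / b.factorial) *
        (t ^ n / (1 - t) ^ (n + b + 1)) * Real.exp (y * t / (1 - t))) := by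
    intro b hb
    rw [Finset.mem_range] at hb
    apply hasSum_shift _ b
    · intro m hm
      rw [Nat.choose_eq_zero_of_lt hm]
      simp
    · have he : HasSum (fun a : ℕ => (y * t / (1 - t)) ^ a / a.factorial)
          (Real.exp (y * t / (1 - t))) := by
        rw [Real.exp_eq_exp_ℝ]
        exact NormedSpace.expSeries_div_hasSum_exp _
      refine hasSum_of_eq (he.mul_left ((n.choose b : ℝ) * (y ^ b / b.factorial) *
        (t ^ n / (1 - t) ^ (n + b + 1)))) (fun a => ?_) rfl
      have hc : ((a + b).choose b : ℝ) = (a + b).factorial / (a.factorial * b.factorial) := by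
        rw [Nat.add_choose, Nat.cast_div (Nat.factorial_mul_factorial_dvd_factorial_add a b) (by positivity)]
        push_cast
        ring
      rw [hc, show n - b + (a + b) = n + a by omega]
      have f1 : ((a + b).factorial : ℝ) ≠ 0 := by positivity
      have f2 : (a.factorial : ℝ) ≠ 0 := by positivity
      have f3 : (b.factorial : ℝ) ≠ 0 := by positivity
      rw [div_pow, mul_pow, show n + (a + b) + 1 = (n + b + 1) + a by omega]
      simp only [pow_add]
      field_simp
  refine hasSum_of_eq (hasSum_sum this) (fun m => ?_) rfl
  rw [colSum, Finset.sum_mul]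

theorem hasSum_main (t : ℝ) (h0 : 0 < t) (h1 : t < 1) (n : ℕ) (x : ℝ) :
    HasSum (fun m : ℕ => (m.choose n : ℝ) * t ^ m * laguerre m x)
      (∑ b ∈ Finset.range (n + 1), (n.choose b : ℝ) * ((-x) ^ b / b.factorial) *
        (t ^ n / (1 - t) ^ (n + b + 1)) * Real.exp ((-x) * t / (1 - t))) := by
  let F : ℝ → ℕ × ℕ → ℝ := fun y p =>
    (p.2.choose n : ℝ) * p.2.choose p.1 * t ^ p.2 * (y ^ p.1 / p.1.factorial)
  have hcol : ∀ y j, HasSum (fun m => F y (j, m)) (colSum t n j * (y ^ j / j.factorial)) :=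
    fun y j => (hasSum_colSum t h0 h1 n j).mul_right _
  have hs1 : Summable (F |x|) := by
    rw [summable_prod_of_nonneg]
    · refine ⟨fun j => (hcol _ j).summable, ?_⟩
      simp_rw [fun j => (hcol |x| j).tsum_eq]
      exact (hasSum_row t h0 h1 n |x|).summable
    · intro p
      simp only [F, Pi.zero_apply]
      positivity
  have hs : Summable (F (-x)) := by
    apply Summable.of_norm
    convert hs1 using 1
    ext p
    simp [F, abs_mul, abs_div, abs_of_pos h0]
  obtain ⟨S, hS⟩ := hs
  have hrow := hS.prod_fiberwise (hcol (-x))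
  have hSe := hrow.unique (hasSum_row t h0 h1 n (-x))
  rw [← hSe]
  have hsw : HasSum (F (-x) ∘ Prod.swap) S := (Equiv.prodComm ℕ ℕ).hasSum_iff.2 hS
  refine hsw.prod_fiberwise (fun m => ?_)
  have : (m.choose n : ℝ) * t ^ m * laguerre m x
      = ∑ j ∈ Finset.range (m + 1), (F (-x) ∘ Prod.swap) (m, j) := by
    rw [laguerre, Finset.mul_sum]
    apply Finset.sum_congr rfl
    intro j _
    simp only [F, Function.comp, Prod.swap]
    rw [neg_pow x]
    ring
  rw [this]
  apply hasSum_sum_of_ne_finset_zero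
  intro j hj
  rw [Finset.mem_range] at hj
  simp only [F, Function.comp, Prod.swap]
  rw [Nat.choose_eq_zero_of_lt (show m < j by omega)]
  simp

theorem laguerre_series_identity (n : ℕ) (lam : ℝ) (hlam0 : 0 < lam) (hlam1 : lam < 1)
    (z : ℝ) (hz : 0 ≤ z) :
    Filter.Tendsto
      (fun N : ℕ => ∑ k ∈ Finset.range N,
        (-1 : ℝ) ^ n * lam ^ (n + k) * ((n + k).choose k) * laguerre (n + k) (z / lam))
      Filter.atTop
      (nhds ((1 / (1 - lam)) * (-lam / (1 - lam)) ^ n *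
        laguerre n (z / (lam * (1 - lam))) * Real.exp (-z / (1 - lam)))) := by
  apply HasSum.tendsto_sum_nat
  have ht : 1 - lam ≠ 0 := by linarith
  have hl : lam ≠ 0 := hlam0.ne'
  have h := (hasSum_main lam hlam0 hlam1 n (z / lam)).mul_left ((-1 : ℝ) ^ n)
  rw [← hasSum_nat_add_iff' n] at h
  rw [Finset.sum_eq_zero (s := Finset.range n), sub_zero] at h
  · refine hasSum_of_eq h (fun k => ?_) ?_
    · rw [add_comm k n, Nat.choose_symm_add]
      ring
    · rw [show -(z / lam) * lam / (1 - lam) = -z / (1 - lam) by field_simp,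
        ← Finset.sum_mul, ← mul_assoc]
      congr 1
      rw [laguerre, Finset.mul_sum, Finset.mul_sum]
      apply Finset.sum_congr rfl
      intro b _
      rw [neg_div, neg_pow (lam / (1 - lam)), neg_pow (z / lam)]
      simp only [div_pow, mul_pow, pow_add]
      field_simp
  · intro m hm
    rw [Nat.choose_eq_zero_of_lt (Finset.mem_range.1 hm)]
    simp
end

section
/- (Generating function for the Laguerre polynomials.) For every real x with |x| < 1 and every real z, the series Σ_{k=0}^∞ x^k · (-1)^k · L_k(z) converges and equals (1/(1+x)) · exp(z·x/(1+x)). -/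
open Filter Topology

lemma lag_row (r w : ℝ) (hr : |r| < 1) (j : ℕ) :
    HasSum (fun m : ℕ => w ^ j / (j.factorial : ℝ) * r ^ (m + j) * ((m + j).choose j : ℝ))
      ((1 / (1 - r)) * ((w * r / (1 - r)) ^ j / (j.factorial : ℝ))) := by
  have h := (hasSum_choose_mul_geometric_of_norm_lt_one j
    (r := r) (by simpa using hr)).mul_left (w ^ j / (j.factorial : ℝ) * r ^ j)
  have h1 : 1 - r ≠ 0 := by
    have := (abs_lt.mp hr).2
    linarith
  have hf : (j.factorial : ℝ) ≠ 0 := by positivity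
  convert! h using 1
  · funext m
    rw [pow_add]; ring
  · rw [div_pow, mul_pow]
    field_simp
    ring

lemma lag_exp (r w : ℝ) :
    HasSum (fun j : ℕ => (1 / (1 - r)) * ((w * r / (1 - r)) ^ j / (j.factorial : ℝ)))
      ((1 / (1 - r)) * Real.exp (w * r / (1 - r))) := by
  apply HasSum.mul_left
  rw [Real.exp_eq_exp_ℝ]
  exact NormedSpace.expSeries_div_hasSum_exp _

lemma lag_prod (r w : ℝ) (hr : |r| < 1) :
    HasSum (fun p : ℕ × ℕ => w ^ p.1 / (p.1.factorial : ℝ) * r ^ (p.2 + p.1)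
      * ((p.2 + p.1).choose p.1 : ℝ)) ((1 / (1 - r)) * Real.exp (w * r / (1 - r))) := by
  have hs : Summable (fun p : ℕ × ℕ => w ^ p.1 / (p.1.factorial : ℝ) * r ^ (p.2 + p.1)
      * ((p.2 + p.1).choose p.1 : ℝ)) := by
    apply Summable.of_norm
    have hr' : |(|r|)| < 1 := by simpa using hr
    have : Summable (fun p : ℕ × ℕ => |w| ^ p.1 / (p.1.factorial : ℝ) * |r| ^ (p.2 + p.1)
      * ((p.2 + p.1).choose p.1 : ℝ)) := by
      rw [summable_prod_of_nonneg (fun p => by positivity)]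
      refine ⟨fun j => (lag_row |r| |w| hr' j).summable, ?_⟩
      simp only [fun j => (lag_row |r| |w| hr' j).tsum_eq]
      exact (lag_exp |r| |w|).summable
    convert this using 2 with p
    simp
  have h2 := hs.hasSum.prod_fiberwise (fun j => lag_row r w hr j)
  rw [← h2.unique (lag_exp r w)]
  exact hs.hasSum

/-- Generating function for the Laguerre polynomials. -/
theorem laguerre_generating_function (x : ℝ) (hx : |x| < 1) (z : ℝ) :
    Filter.Tendsto
      (fun N : ℕ => ∑ k ∈ Finset.range N, x ^ k * (-1 : ℝ) ^ k * laguerre k z)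
      Filter.atTop
      (nhds ((1 / (1 + x)) * Real.exp (z * x / (1 + x)))) := by
  have h := lag_prod (-x) (-z) (by simpa using hx)
  have h2 := ((Equiv.hasSum_iff (Finset.HasAntidiagonal.sigmaAntidiagonalEquivProd (A := ℕ))).mpr h).sigma
    (fun n => hasSum_fintype _)
  have h3 := h2.tendsto_sum_nat
  convert h3 using 2 with N
  · apply Finset.sum_congr rfl
    intro k _
    have e := Finset.sum_attach (Finset.HasAntidiagonal.antidiagonal k) (fun p : ℕ × ℕ =>
      (-z) ^ p.1 / (p.1.factorial : ℝ) * (-x) ^ (p.2 + p.1) * ((p.2 + p.1).choose p.1 : ℝ))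
    refine Eq.trans ?_ e.symm
    rw [Finset.Nat.sum_antidiagonal_eq_sum_range_succ_mk, laguerre, Finset.mul_sum]
    apply Finset.sum_congr rfl
    intro j hj
    have : k - j + j = k := Nat.sub_add_cancel (by simpa [Nat.lt_succ_iff] using hj)
    simp only [this]
    rw [neg_pow z, neg_pow x]
    ring
  · rw [sub_neg_eq_add, neg_mul_neg]
end

section
/- For all natural numbers m, n and every real λ, the integral ∫_0^∞ L_m((1-λ)z) · L_n(z) · e^{-z} dz equals C(m,n) · λ^{m-n} · (1-λ)^n if m ≥ n, and equals 0 if m < n, where C(m,n) is the binomial coefficient. -/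
open MeasureTheory

lemma alt_sum_rec (f : ℕ → ℝ) (n : ℕ) :
    ∑ j ∈ Finset.range (n + 2), (-1 : ℝ) ^ j * ((n + 1).choose j) * f j =
      ∑ j ∈ Finset.range (n + 1), (-1 : ℝ) ^ j * (n.choose j) * (f j - f (j + 1)) := by
  have h1 : ∑ j ∈ Finset.range (n + 1), (-1 : ℝ) ^ j * (n.choose j) * f j =
      ∑ j ∈ Finset.range (n + 2), (-1 : ℝ) ^ j * (n.choose j) * f j := by
    rw [Finset.sum_range_succ _ (n + 1)]
    simp
  simp only [mul_sub, Finset.sum_sub_distrib]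
  rw [h1, Finset.sum_range_succ', Finset.sum_range_succ' _ (n + 1)]
  simp only [Nat.choose_succ_succ, Nat.cast_add, mul_add, add_mul, Finset.sum_add_distrib,
    Nat.choose_zero_right, pow_succ]
  simp only [mul_neg, mul_one, neg_mul, Finset.sum_neg_distrib]
  ring

lemma alt_sum_choose (n k a : ℕ) :
    ∑ j ∈ Finset.range (n + 1), (-1 : ℝ) ^ j * (n.choose j) * ((j + a).choose k : ℝ) =
      if n ≤ k then (-1 : ℝ) ^ n * (a.choose (k - n)) else 0 := by
  induction n generalizing k with
  | zero => simp
  | succ n ih =>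
    rw [alt_sum_rec (fun j => ((j + a).choose k : ℝ))]
    cases k with
    | zero => simp
    | succ k =>
      have h : ∀ j : ℕ, ((j + a).choose (k + 1) : ℝ) - ((j + 1 + a).choose (k + 1) : ℝ) =
          - ((j + a).choose k : ℝ) := by
        intro j
        rw [show j + 1 + a = (j + a) + 1 by ring, Nat.choose_succ_succ]
        push_cast
        ring
      simp only [h, mul_neg, Finset.sum_neg_distrib, ih, Nat.add_le_add_iff_right,
        Nat.add_sub_add_right]
      split_ifs <;> ring

lemma pow_exp_integrable (k : ℕ) :
    IntegrableOn (fun x : ℝ => x ^ k * Real.exp (-x)) (Set.Ioi 0) := by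
  have h := Real.GammaIntegral_convergent (s := (k : ℝ) + 1) (by positivity)
  simpa [mul_comm] using h

lemma pow_exp_integral (k : ℕ) :
    ∫ x in Set.Ioi (0 : ℝ), x ^ k * Real.exp (-x) = k.factorial := by
  have h := Real.Gamma_eq_integral (s := (k : ℝ) + 1) (by positivity)
  rw [Real.Gamma_nat_eq_factorial] at h
  rw [h]
  simp [mul_comm]

lemma laguerre_sum_eval (m n : ℕ) (u : ℝ) :
    ∑ i ∈ Finset.range (m + 1), (-1 : ℝ) ^ i * (m.choose i) * u ^ i *
        ((-1 : ℝ) ^ n * (i.choose n)) =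
      if n ≤ m then (m.choose n : ℝ) * (1 - u) ^ (m - n) * u ^ n else 0 := by
  split_ifs with hnm
  · obtain ⟨d, rfl⟩ := Nat.exists_eq_add_of_le hnm
    rw [show n + d + 1 = n + (d + 1) by ring, Finset.sum_range_add,
      Finset.sum_eq_zero (s := Finset.range n), zero_add, Nat.add_sub_cancel_left,
      show (1 - u) = -u + 1 by ring, add_pow, Finset.mul_sum, Finset.sum_mul]
    · refine Finset.sum_congr rfl fun r _ => ?_
      have h := Nat.choose_mul (n := n + d) (k := n + r) (s := n) (by omega)
      rw [Nat.add_sub_cancel_left, Nat.add_sub_cancel_left] at h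
      have h' : ((n + d).choose (n + r) : ℝ) * ((n + r).choose n) =
          ((n + d).choose n) * (d.choose r) := by exact_mod_cast h
      have hs : (-1 : ℝ) ^ n * (-1) ^ n = 1 := by rw [← mul_pow]; simp
      calc _ = ((-1 : ℝ) ^ n * (-1) ^ n) * (-1) ^ r * u ^ n * u ^ r *
              (((n + d).choose (n + r) : ℝ) * ((n + r).choose n)) := by
            rw [pow_add, pow_add]; ring
        _ = _ := by rw [h', hs, neg_pow u r]; ring
    · intro i hi
      rw [Nat.choose_eq_zero_of_lt (Finset.mem_range.mp hi)]
      simp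
  · refine Finset.sum_eq_zero fun i hi => ?_
    have := Finset.mem_range.mp hi
    rw [Nat.choose_eq_zero_of_lt (n := i) (k := n) (by omega)]
    simp

theorem laguerre_scaled_orthogonality (m n : ℕ) (lam : ℝ) :
    ∫ z in Set.Ioi (0 : ℝ), laguerre m ((1 - lam) * z) * laguerre n z * Real.exp (-z) =
      if n ≤ m then (m.choose n : ℝ) * lam ^ (m - n) * (1 - lam) ^ n else 0 := by
  have hexp : ∀ z : ℝ, laguerre m ((1 - lam) * z) * laguerre n z * Real.exp (-z) =
      ∑ i ∈ Finset.range (m + 1), ∑ j ∈ Finset.range (n + 1),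
        ((-1 : ℝ) ^ i * (m.choose i) * (1 - lam) ^ i / i.factorial *
          ((-1 : ℝ) ^ j * (n.choose j) / j.factorial)) * (z ^ (j + i) * Real.exp (-z)) := by
    intro z
    unfold laguerre
    rw [Finset.sum_mul_sum, Finset.sum_mul]
    refine Finset.sum_congr rfl fun i _ => ?_
    rw [Finset.sum_mul]
    refine Finset.sum_congr rfl fun j _ => ?_
    rw [mul_pow, pow_add]
    ring
  simp only [hexp]
  rw [integral_finsetSum _ fun i _ => integrable_finsetSum _ fun j _ =>
    (pow_exp_integrable (j + i)).const_mul _]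
  have hin := laguerre_sum_eval m n (1 - lam)
  rw [sub_sub_cancel] at hin
  rw [← hin]
  refine Finset.sum_congr rfl fun i _ => ?_
  rw [integral_finsetSum _ fun j _ => (pow_exp_integrable (j + i)).const_mul _]
  simp only [integral_const_mul, pow_exp_integral]
  have hc := alt_sum_choose n i i
  have hc' : (if n ≤ i then (-1 : ℝ) ^ n * (i.choose (i - n)) else 0) =
      (-1 : ℝ) ^ n * (i.choose n) := by
    split_ifs with h
    · rw [Nat.choose_symm h]
    · rw [Nat.choose_eq_zero_of_lt (by omega)]; simp
  rw [← hc', ← hc, Finset.mul_sum]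
  refine Finset.sum_congr rfl fun j _ => ?_
  have hf : ((j + i).factorial : ℝ) = (j + i).choose i * i.factorial * j.factorial := by
    have := Nat.add_choose_mul_factorial_mul_factorial j i
    rw [← this]; push_cast; ring
  rw [hf]
  have h1 : (i.factorial : ℝ) ≠ 0 := by positivity
  have h2 : (j.factorial : ℝ) ≠ 0 := by positivity
  field_simp
end

section
/- For all natural numbers k and n, the integral ∫_0^∞ z^k · L_n(z) · e^{-z} dz equals (-1)^n · C(k,n) · k! if k ≥ n, and equals 0 if k < n, where C(k,n) is the binomial coefficient. -/
open MeasureTheory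

lemma lag_sum (n k a : ℕ) :
    ∑ j ∈ Finset.range (n + 1), (-1 : ℝ) ^ j * (n.choose j) * ((a + j).choose k : ℝ) =
      if n ≤ k then (-1 : ℝ) ^ n * (a.choose (k - n) : ℝ) else 0 := by
  induction n generalizing a with
  | zero => simp
  | succ n ih =>
    have h : ∑ j ∈ Finset.range (n + 1 + 1),
          (-1 : ℝ) ^ j * ((n + 1).choose j) * ((a + j).choose k : ℝ) =
        ∑ j ∈ Finset.range (n + 1), (-1 : ℝ) ^ j * (n.choose j) * ((a + j).choose k : ℝ) -
        ∑ j ∈ Finset.range (n + 1),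
          (-1 : ℝ) ^ j * (n.choose j) * ((a + 1 + j).choose k : ℝ) := by
      have h1 : ∑ j ∈ Finset.range (n + 1),
            (-1 : ℝ) ^ j * (n.choose j) * ((a + j).choose k : ℝ) =
          ∑ j ∈ Finset.range (n + 1 + 1),
            (-1 : ℝ) ^ j * (n.choose j) * ((a + j).choose k : ℝ) := by
        rw [Finset.sum_range_succ _ (n + 1)]
        simp
      rw [h1, Finset.sum_range_succ', Finset.sum_range_succ' _ (n + 1), add_sub_right_comm,
        ← Finset.sum_sub_distrib]
      congr 1
      · refine Finset.sum_congr rfl fun j _ => ?_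
        rw [Nat.choose_succ_succ, show a + 1 + j = a + (j + 1) by ring]
        push_cast
        ring
      · simp
    rw [h, ih, ih]
    by_cases h1 : n + 1 ≤ k
    · obtain ⟨m, rfl⟩ := Nat.exists_eq_add_of_le h1
      rw [if_pos (by omega), if_pos (by omega), if_pos (by omega),
        show n + 1 + m - n = m + 1 by omega, show n + 1 + m - (n + 1) = m by omega,
        Nat.choose_succ_succ]
      push_cast
      ring
    · rw [if_neg h1]
      by_cases h2 : n ≤ k
      · have : k - n = 0 := by omega
        simp [this]
      · simp [h2]

lemma lag_integrable (m : ℕ) :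
    IntegrableOn (fun z : ℝ => z ^ m * Real.exp (-z)) (Set.Ioi 0) := by
  have h := Real.GammaIntegral_convergent (s := (m : ℝ) + 1) (by positivity)
  refine h.congr_fun (fun z _ => ?_) measurableSet_Ioi
  simp [mul_comm]

lemma lag_integral (m : ℕ) :
    ∫ z in Set.Ioi (0 : ℝ), z ^ m * Real.exp (-z) = m.factorial := by
  rw [← Real.Gamma_nat_eq_factorial, Real.Gamma_eq_integral (by positivity)]
  refine setIntegral_congr_fun measurableSet_Ioi (fun z _ => ?_)
  simp [mul_comm]

/-- Fourier–Laguerre coefficients of the powers `z^k`. -/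
theorem pow_laguerre_integral (k n : ℕ) :
    ∫ z in Set.Ioi (0 : ℝ), z ^ k * laguerre n z * Real.exp (-z) =
      if n ≤ k then (-1 : ℝ) ^ n * (k.choose n : ℝ) * (k.factorial : ℝ) else 0 := by
  have h : ∀ z : ℝ, z ^ k * laguerre n z * Real.exp (-z) =
      ∑ j ∈ Finset.range (n + 1), ((-1 : ℝ) ^ j * (n.choose j) / (j.factorial)) *
        (z ^ (k + j) * Real.exp (-z)) := by
    intro z
    rw [laguerre, Finset.mul_sum, Finset.sum_mul]
    refine Finset.sum_congr rfl fun j _ => ?_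
    rw [pow_add]
    ring
  simp_rw [h]
  rw [integral_finsetSum _ fun j _ => (lag_integrable (k + j)).const_mul _]
  simp_rw [integral_const_mul, lag_integral]
  have h2 : ∀ j : ℕ, ((-1 : ℝ) ^ j * (n.choose j) / (j.factorial)) * ((k + j).factorial : ℝ) =
      ((-1 : ℝ) ^ j * (n.choose j) * ((k + j).choose k : ℝ)) * k.factorial := by
    intro j
    have h3 : (((k + j).choose k * k.factorial * j.factorial : ℕ) : ℝ) = (k + j).factorial := by
      rw [Nat.choose_symm_add, Nat.add_choose_mul_factorial_mul_factorial]
    have h4 : (j.factorial : ℝ) ≠ 0 := by positivity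
    rw [← h3]
    push_cast
    field_simp
  simp_rw [h2]
  rw [← Finset.sum_mul, lag_sum]
  by_cases hk : n ≤ k
  · simp [hk, Nat.choose_symm hk]
  · simp [hk]
end

section
/- For every natural number n and every real p with p > -1 such that p is not an integer in {0, 1, ..., n-1}, the integral ∫_0^∞ z^p · L_n(z) · e^{-z} dz equals (-1)^n · Γ(p+1)^2 / (n! · Γ(p-n+1)), where Γ denotes the Gamma function. -/
open MeasureTheory

theorem lag_choose_prod (r : ℝ) (k : ℕ) :
    (k.factorial : ℝ) * Ring.choose r k = ∏ i ∈ Finset.range k, (r - i) := by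
  have h := Ring.descPochhammer_eq_factorial_smul_choose r k
  rw [nsmul_eq_mul] at h
  rw [← h, Polynomial.descPochhammer_smeval_eq_ascPochhammer,
    Polynomial.ascPochhammer_smeval_eq_eval, ← descPochhammer_eval_eq_ascPochhammer,
    descPochhammer_eval_eq_prod_range]

theorem lag_gamma_up (p : ℝ) (hp : p > -1) (j : ℕ) :
    Real.Gamma (p + j + 1) = Real.Gamma (p + 1) * ∏ i ∈ Finset.range j, (p + 1 + i) := by
  induction j with
  | zero => simp
  | succ j ih =>
    have hj : (0 : ℝ) ≤ j := Nat.cast_nonneg j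
    rw [Finset.prod_range_succ, ← mul_assoc, ← ih, Nat.cast_succ,
      show p + ((j : ℝ) + 1) + 1 = (p + j + 1) + 1 by ring,
      Real.Gamma_add_one (by linarith)]
    ring

theorem lag_gamma_down (p : ℝ) (n : ℕ) (hp' : ∀ j : ℕ, j < n → p ≠ (j : ℝ)) :
    Real.Gamma (p + 1) = Real.Gamma (p - n + 1) * ∏ i ∈ Finset.range n, (p - i) := by
  induction n with
  | zero => simp
  | succ n ih =>
    rw [ih (fun j hj => hp' j (by omega)), Finset.prod_range_succ, Nat.cast_succ,
      show p - ((n : ℝ) + 1) + 1 = p - n by ring,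
      Real.Gamma_add_one (sub_ne_zero.mpr (hp' n (by omega)))]
    ring

theorem lag_sum_s5 (p : ℝ) (n : ℕ) :
    ∑ j ∈ Finset.range (n + 1), (-1 : ℝ) ^ j * (n.choose j) / (j.factorial) *
      ∏ i ∈ Finset.range j, (p + 1 + i) =
    (-1 : ℝ) ^ n * (∏ i ∈ Finset.range n, (p - i)) / n.factorial := by
  have hL : ∀ j ∈ Finset.range (n + 1), (-1 : ℝ) ^ j * (n.choose j) / (j.factorial) *
      ∏ i ∈ Finset.range j, (p + 1 + i) =
      Ring.choose (-p - 1) j * Ring.choose (n : ℝ) (n - j) := by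
    intro j hj
    have hj' : j ≤ n := by simpa [Nat.lt_succ_iff] using hj
    have h := lag_choose_prod (-p - 1) j
    have h2 : ∏ i ∈ Finset.range j, (-p - 1 - (i : ℝ)) =
        (-1) ^ j * ∏ i ∈ Finset.range j, (p + 1 + i) := by
      rw [← Finset.card_range j, ← Finset.prod_const, Finset.card_range,
        ← Finset.prod_mul_distrib]
      exact Finset.prod_congr rfl (fun i _ => by ring)
    have hf : (j.factorial : ℝ) ≠ 0 := by positivity
    rw [Ring.choose_natCast, Nat.choose_symm hj']
    rw [h2] at h
    field_simp
    linear_combination (-(n.choose j : ℝ)) * h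
  rw [Finset.sum_congr rfl hL,
    ← Finset.Nat.sum_antidiagonal_eq_sum_range_succ
      (fun a b => Ring.choose (-p - 1) a * Ring.choose (n : ℝ) b) n,
    ← Ring.add_choose_eq n (Commute.all _ _)]
  have h := lag_choose_prod (-p - 1 + n) n
  have h2 : ∏ i ∈ Finset.range n, (-p - 1 + n - (i : ℝ)) =
      (-1) ^ n * ∏ i ∈ Finset.range n, (p - i) := by
    rw [← Finset.prod_range_reflect, ← Finset.card_range n, ← Finset.prod_const,
      Finset.card_range, ← Finset.prod_mul_distrib]
    refine Finset.prod_congr rfl (fun i hi => ?_)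
    have hi' : i < n := Finset.mem_range.mp hi
    have : ((n - 1 - i : ℕ) : ℝ) = n - 1 - i := by
      rw [Nat.cast_sub (by omega), Nat.cast_sub (by omega)]; simp
    rw [this]; ring
  have hf : (n.factorial : ℝ) ≠ 0 := by positivity
  rw [h2] at h
  rw [← h]
  field_simp

theorem rpow_laguerre_integral (n : ℕ) (p : ℝ) (hp : p > -1)
    (hp' : ∀ j : ℕ, j < n → p ≠ (j : ℝ)) :
    ∫ z in Set.Ioi (0 : ℝ), z ^ p * laguerre n z * Real.exp (-z) =
      (-1 : ℝ) ^ n * (Real.Gamma (p + 1)) ^ 2 /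
        ((n.factorial : ℝ) * Real.Gamma (p - n + 1)) := by
  have hpos : ∀ j : ℕ, 0 < p + j + 1 := fun j => by
    have hj : (0 : ℝ) ≤ j := Nat.cast_nonneg j
    linarith
  have hI : ∫ z in Set.Ioi (0 : ℝ), z ^ p * laguerre n z * Real.exp (-z) =
      ∫ z in Set.Ioi (0 : ℝ), ∑ j ∈ Finset.range (n + 1),
        ((-1 : ℝ) ^ j * (n.choose j) / (j.factorial)) *
          (Real.exp (-z) * z ^ ((p + j + 1) - 1)) := by
    refine setIntegral_congr_fun measurableSet_Ioi (fun z hz => ?_)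
    have hz' : (0 : ℝ) < z := hz
    simp only [laguerre, Finset.mul_sum, Finset.sum_mul]
    refine Finset.sum_congr rfl (fun j _ => ?_)
    rw [add_sub_cancel_right, Real.rpow_add hz', Real.rpow_natCast]
    ring
  rw [hI, integral_finsetSum _ (fun j _ =>
    (Real.GammaIntegral_convergent (hpos j)).const_mul _)]
  have hT : ∀ j ∈ Finset.range (n + 1), (∫ z in Set.Ioi (0 : ℝ),
      ((-1 : ℝ) ^ j * (n.choose j) / (j.factorial)) *
          (Real.exp (-z) * z ^ ((p + j + 1) - 1))) = Real.Gamma (p + 1) *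
      ((-1 : ℝ) ^ j * (n.choose j) / (j.factorial) *
      ∏ i ∈ Finset.range j, (p + 1 + i)) := by
    intro j _
    rw [integral_const_mul, ← Real.Gamma_eq_integral (hpos j), lag_gamma_up p hp j]
    ring
  rw [Finset.sum_congr rfl hT, ← Finset.mul_sum, lag_sum_s5]
  have hd := lag_gamma_down p n hp'
  have h0 : Real.Gamma (p + 1) ≠ 0 := (Real.Gamma_pos_of_pos (by linarith)).ne'
  have hG : Real.Gamma (p - n + 1) ≠ 0 := by
    intro h
    rw [h, zero_mul] at hd
    exact h0 hd
  have hf : (n.factorial : ℝ) ≠ 0 := by positivity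
  rw [eq_div_iff (mul_ne_zero hf hG), mul_div_assoc, ← mul_assoc]
  field_simp
  linear_combination (-1 : ℝ) * hd
end

section
/- For every real λ with 0 < λ < 1 and all natural numbers n and k, the integral ∫_0^∞ π_n^{(λ)}(μ) · p_k^{(λ)}(μ) dμ equals C(k,n) · λ^n · (1-λ)^{k-n} if k ≥ n, and equals 0 if k < n, where C(k,n) is the binomial coefficient. In particular, each p_k^{(λ)} is an observable distribution: all these pairings are non-negative. -/
open MeasureTheory

/-- The quantum state function `π_n^{(λ)}` of the `λ`-quantization. -/
noncomputable def piQuant (lam : ℝ) (n : ℕ) (μ : ℝ) : ℝ :=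
  (1 / (1 - lam)) * (-lam / (1 - lam)) ^ n * laguerre n (μ / (lam * (1 - lam))) *
    Real.exp (-μ / (1 - lam))

/-- The basic observable distribution `p_k^{(λ)}`. -/
noncomputable def pBasic (lam : ℝ) (k : ℕ) (μ : ℝ) : ℝ :=
  (1 / (lam * (k.factorial : ℝ))) * (μ / lam) ^ k * Real.exp (-μ / lam)

lemma alt_choose_step (n : ℕ) (f : ℕ → ℝ) :
    ∑ j ∈ Finset.range (n + 2), (-1 : ℝ) ^ j * ((n + 1).choose j) * f j =
      ∑ j ∈ Finset.range (n + 1), (-1 : ℝ) ^ j * (n.choose j) * (f j - f (j + 1)) := by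
  have h1 : ∑ j ∈ Finset.range (n + 1), (-1 : ℝ) ^ j * (n.choose j) * f j =
      ∑ j ∈ Finset.range (n + 1), (-1 : ℝ) ^ (j + 1) * (n.choose (j + 1)) * f (j + 1) + f 0 := by
    have := Finset.sum_range_succ (fun j => (-1 : ℝ) ^ j * (n.choose j) * f j) (n + 1)
    rw [Finset.sum_range_succ'] at this
    simpa using this.symm
  simp_rw [mul_sub]
  rw [Finset.sum_sub_distrib, h1, Finset.sum_range_succ', add_sub_right_comm,
    ← Finset.sum_sub_distrib]
  congr 1
  · refine Finset.sum_congr rfl fun j _ => ?_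
    rw [Nat.choose_succ_succ]
    push_cast
    ring
  · simp

lemma alt_choose_sum (n m k : ℕ) :
    ∑ j ∈ Finset.range (n + 1), (-1 : ℝ) ^ j * (n.choose j) * ((j + m).choose k : ℝ) =
      if n ≤ k then (-1 : ℝ) ^ n * (m.choose (k - n)) else 0 := by
  induction n generalizing k with
  | zero => simp
  | succ n ih =>
    rw [alt_choose_step n (fun j => ((j + m).choose k : ℝ))]
    cases k with
    | zero => simp
    | succ k =>
      have : ∀ j : ℕ, (((j + m).choose (k + 1) : ℝ) - ((j + 1 + m).choose (k + 1) : ℝ)) =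
          - ((j + m).choose k : ℝ) := by
        intro j
        rw [show j + 1 + m = (j + m) + 1 by ring, Nat.choose_succ_succ (j + m) k]
        push_cast
        ring
      simp_rw [this, mul_neg]
      rw [Finset.sum_neg_distrib, ih]
      by_cases h : n ≤ k
      · simp [h, pow_succ]
      · simp [h]

lemma integral_pow_exp (m : ℕ) (b : ℝ) (hb : 0 < b) :
    IntegrableOn (fun x : ℝ => x ^ m * Real.exp (-(b * x))) (Set.Ioi 0) ∧
    ∫ x in Set.Ioi (0 : ℝ), x ^ m * Real.exp (-(b * x)) = m.factorial * (1 / b) ^ (m + 1) := by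
  constructor
  · have := integrableOn_rpow_mul_exp_neg_mul_rpow (p := 1) (s := m) (b := b)
      (by have : (0 : ℝ) ≤ m := Nat.cast_nonneg m
          linarith) one_pos hb
    simpa using this
  · have := Real.integral_rpow_mul_exp_neg_mul_Ioi (a := (m : ℝ) + 1) (r := b) (by positivity) hb
    rw [Real.Gamma_nat_eq_factorial] at this
    simp only [add_sub_cancel_right, Real.rpow_natCast] at this
    rw [this, mul_comm]
    congr 1
    exact_mod_cast Real.rpow_natCast (1 / b) (m + 1)

lemma pairing_eq (lam : ℝ) (hlam0 : 0 < lam) (hlam1 : lam < 1) (n k : ℕ) :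
    ∫ μ in Set.Ioi (0 : ℝ), piQuant lam n μ * pBasic lam k μ =
      if n ≤ k then (k.choose n : ℝ) * lam ^ n * (1 - lam) ^ (k - n) else 0 := by
  have h1 : 0 < 1 - lam := by linarith
  obtain ⟨q, hq⟩ : ∃ q, q = 1 - lam := ⟨_, rfl⟩
  have hq0 : 0 < q := hq ▸ h1
  have hb : 0 < 1 / (lam * q) := by positivity
  have hfun : ∀ μ : ℝ, piQuant lam n μ * pBasic lam k μ =
      ∑ j ∈ Finset.range (n + 1), ((1 / q) * (-lam / q) ^ n * (1 / (lam * k.factorial)) *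
        (1 / lam) ^ k * ((-1 : ℝ) ^ j * (n.choose j) * (1 / (lam * q)) ^ j / j.factorial)) *
        (μ ^ (j + k) * Real.exp (-(1 / (lam * q) * μ))) := by
    intro μ
    have he : Real.exp (-(1 / (lam * q) * μ)) = Real.exp (-μ / q) * Real.exp (-μ / lam) := by
      rw [← Real.exp_add]
      congr 1
      field_simp
      rw [hq]
      ring
    simp only [piQuant, pBasic, laguerre, ← hq, he]
    rw [Finset.mul_sum, Finset.sum_mul, Finset.sum_mul]
    refine Finset.sum_congr rfl fun j _ => ?_
    rw [div_eq_mul_one_div μ (lam * q), div_eq_mul_one_div μ lam, mul_pow, mul_pow, pow_add]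
    ring
  simp_rw [hfun]
  rw [integral_finsetSum _ fun j _ => ((integral_pow_exp (j + k) _ hb).1.const_mul _)]
  simp_rw [integral_const_mul, (integral_pow_exp _ _ hb).2]
  have hterm : ∀ j : ℕ, ((1 / q) * (-lam / q) ^ n * (1 / (lam * k.factorial)) *
        (1 / lam) ^ k * ((-1 : ℝ) ^ j * (n.choose j) * (1 / (lam * q)) ^ j / j.factorial)) *
        ((j + k).factorial * (1 / (1 / (lam * q))) ^ (j + k + 1)) =
      (-lam / q) ^ n * q ^ k * ((-1 : ℝ) ^ j * (n.choose j) * ((j + k).choose k : ℝ)) := by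
    intro j
    have hf : ((j + k).factorial : ℝ) = ((j + k).choose k : ℝ) * j.factorial * k.factorial := by
      rw [← Nat.add_choose_mul_factorial_mul_factorial j k]
      push_cast
      ring
    have hj : (j.factorial : ℝ) ≠ 0 := by positivity
    have hk : (k.factorial : ℝ) ≠ 0 := by positivity
    rw [hf, one_div_one_div, pow_succ, pow_add, one_div_pow, one_div_pow, mul_pow lam q k]
    field_simp
  simp_rw [hterm]
  rw [← Finset.mul_sum, alt_choose_sum, ← hq]
  split_ifs with h
  · rw [Nat.choose_symm h]
    obtain ⟨d, rfl⟩ := Nat.exists_eq_add_of_le h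
    rw [Nat.add_sub_cancel_left, neg_div, neg_pow, div_pow, pow_add]
    have : (-1 : ℝ) ^ n * (-1) ^ n = 1 := by rw [← mul_pow]; simp
    field_simp
    linear_combination (((n + d).choose n : ℝ)) * this
  · simp

/-- Pairings of the quantum states with the basic observable distributions;
in particular all the pairings are non-negative. -/
theorem piQuant_pBasic_pairing (lam : ℝ) (hlam0 : 0 < lam) (hlam1 : lam < 1) (n k : ℕ) :
    (∫ μ in Set.Ioi (0 : ℝ), piQuant lam n μ * pBasic lam k μ =
      if n ≤ k then (k.choose n : ℝ) * lam ^ n * (1 - lam) ^ (k - n) else 0) ∧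
    0 ≤ ∫ μ in Set.Ioi (0 : ℝ), piQuant lam n μ * pBasic lam k μ := by
  have h := pairing_eq lam hlam0 hlam1 n k
  refine ⟨h, ?_⟩
  rw [h]
  have h1 : 0 < 1 - lam := by linarith
  split_ifs
  · positivity
  · exact le_rfl
end

section
/- (Duality of the λ and 1-λ quantizations.) For every real λ with 0 < λ < 1 and all natural numbers n and m, the integral ∫_0^∞ π_n^{(λ)}(μ) · π_m^{(1-λ)}(μ) dμ equals 1 if n = m and 0 otherwise. -/
open MeasureTheory

lemma aux_sign (m j : ℕ) (h : j ≤ m) : (-1 : ℤ) ^ j = (-1) ^ m * (-1) ^ (m - j) := by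
  obtain ⟨k, rfl⟩ := Nat.exists_eq_add_of_le h
  rw [Nat.add_sub_cancel_left, pow_add, mul_assoc, ← mul_pow]
  simp

lemma aux_diff (m i : ℕ) :
    (fwdDiff 1)^[m] (fun x ↦ x.choose i : ℕ → ℤ) i = i.choose m := by
  rcases le_or_gt m i with h | h
  · obtain ⟨k, rfl⟩ := Nat.exists_eq_add_of_le h
    rw [fwdDiff_iter_choose]
    have := Nat.choose_symm_add (a := m) (b := k)
    simp [this]
  · obtain ⟨k, rfl⟩ := Nat.exists_eq_add_of_lt h
    have h0 := fwdDiff_iter_choose 0 i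
    rw [add_zero] at h0
    rw [(by ring : i + k + 1 = (k + 1) + i), Function.iterate_add_apply, h0,
      Nat.choose_eq_zero_of_lt (by omega)]
    simp_rw [Nat.choose_zero_right, Function.iterate_succ_apply, Nat.cast_one, fwdDiff_const,
      fwdDiff_iter_eq_sum_shift]
    simp

lemma aux_sum1 (m i : ℕ) :
    ∑ j ∈ Finset.range (m + 1), (-1 : ℤ) ^ j * (m.choose j) * ((i + j).choose i) =
      (-1) ^ m * i.choose m := by
  rw [← aux_diff, fwdDiff_iter_eq_sum_shift, Finset.mul_sum]
  refine Finset.sum_congr rfl fun j hj ↦ ?_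
  rw [aux_sign m j (by have := Finset.mem_range.1 hj; omega)]
  simp only [smul_eq_mul, mul_one]
  ring

lemma aux_sum2 (n m : ℕ) :
    ∑ i ∈ Finset.range (n + 1), (-1 : ℤ) ^ i * (n.choose i) * (i.choose m) =
      (-1) ^ n * if n = m then 1 else 0 := by
  rw [← fwdDiff_iter_choose_zero m n, fwdDiff_iter_eq_sum_shift, Finset.mul_sum]
  refine Finset.sum_congr rfl fun j hj ↦ ?_
  rw [aux_sign n j (by have := Finset.mem_range.1 hj; omega)]
  simp only [smul_eq_mul, mul_one, zero_add]
  ring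

lemma aux_sum (n m : ℕ) :
    ∑ i ∈ Finset.range (n + 1), ∑ j ∈ Finset.range (m + 1),
      ((-1 : ℤ) ^ i * (n.choose i)) * ((-1 : ℤ) ^ j * (m.choose j)) * ((i + j).choose i) =
      if n = m then 1 else 0 := by
  have : ∀ i ∈ Finset.range (n + 1), ∑ j ∈ Finset.range (m + 1),
      ((-1 : ℤ) ^ i * (n.choose i)) * ((-1 : ℤ) ^ j * (m.choose j)) * ((i + j).choose i) =
      (-1) ^ m * ((-1 : ℤ) ^ i * (n.choose i) * (i.choose m)) := by
    intro i _
    simp_rw [mul_assoc ((-1 : ℤ) ^ i * (n.choose i))]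
    rw [← Finset.mul_sum, aux_sum1]
    ring
  rw [Finset.sum_congr rfl this, ← Finset.mul_sum, aux_sum2]
  split_ifs with h
  · subst h
    rw [mul_one, ← mul_pow]; simp
  · simp

lemma aux_integrable (k : ℕ) {r : ℝ} (hr : 0 < r) :
    Integrable (fun t : ℝ ↦ t ^ k * Real.exp (-(r * t))) (volume.restrict (Set.Ioi 0)) := by
  have := integrableOn_rpow_mul_exp_neg_mul_rpow (p := 1) (s := k) (b := r)
    (by have : (0 : ℝ) ≤ k := Nat.cast_nonneg k
        linarith) one_pos hr
  simpa [IntegrableOn] using this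

lemma aux_integral (k : ℕ) {r : ℝ} (hr : 0 < r) :
    ∫ t in Set.Ioi (0 : ℝ), t ^ k * Real.exp (-(r * t)) = k.factorial / r ^ (k + 1) := by
  have := Real.integral_rpow_mul_exp_neg_mul_Ioi (a := (k : ℝ) + 1) (r := r) (by positivity) hr
  rw [Real.Gamma_nat_eq_factorial, add_sub_cancel_right] at this
  simp only [Real.rpow_natCast] at this
  rw [this, ← Nat.cast_succ, Real.rpow_natCast]
  simp
  ring

lemma aux_laguerre (n m : ℕ) {r : ℝ} (hr : 0 < r) :
    ∫ t in Set.Ioi (0 : ℝ), laguerre n (r * t) * laguerre m (r * t) * Real.exp (-(r * t)) =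
      (if n = m then 1 else 0) / r := by
  have hfun : ∀ t : ℝ, laguerre n (r * t) * laguerre m (r * t) * Real.exp (-(r * t)) =
      ∑ i ∈ Finset.range (n + 1), ∑ j ∈ Finset.range (m + 1),
        (((-1 : ℝ) ^ i * (n.choose i)) * ((-1 : ℝ) ^ j * (m.choose j)) * r ^ (i + j) /
          (i.factorial * j.factorial)) * (t ^ (i + j) * Real.exp (-(r * t))) := by
    intro t
    simp only [laguerre]
    rw [Finset.sum_mul_sum, Finset.sum_mul]
    refine Finset.sum_congr rfl fun i _ ↦ ?_
    rw [Finset.sum_mul]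
    refine Finset.sum_congr rfl fun j _ ↦ ?_
    field_simp
    ring
  simp_rw [hfun]
  rw [integral_finsetSum _ fun i _ ↦ integrable_finsetSum _ fun j _ ↦
    (aux_integrable (i + j) hr).const_mul _]
  have h2 := aux_sum n m
  have h3 : ((if n = m then 1 else 0 : ℤ) : ℝ) = if n = m then 1 else 0 := by
    split_ifs <;> simp
  rw [← h3, ← h2]
  push_cast
  rw [Finset.sum_div]
  refine Finset.sum_congr rfl fun i _ ↦ ?_
  rw [integral_finsetSum _ fun j _ ↦ (aux_integrable (i + j) hr).const_mul _, Finset.sum_div]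
  refine Finset.sum_congr rfl fun j _ ↦ ?_
  rw [integral_const_mul, aux_integral _ hr, Nat.cast_add_choose]
  field_simp
  try ring

/-- Duality between the `λ` and `1-λ` quantizations. -/
theorem piQuant_duality (lam : ℝ) (hlam0 : 0 < lam) (hlam1 : lam < 1) (n m : ℕ) :
    ∫ μ in Set.Ioi (0 : ℝ), piQuant lam n μ * piQuant (1 - lam) m μ =
      if n = m then 1 else 0 := by
  have h1 : 0 < 1 - lam := by linarith
  have hr : 0 < 1 / (lam * (1 - lam)) := by positivity
  have hfun : ∀ t : ℝ, piQuant lam n t * piQuant (1 - lam) m t =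
      ((1 / (lam * (1 - lam))) * ((-lam / (1 - lam)) ^ n * (-(1 - lam) / lam) ^ m)) *
      (laguerre n (1 / (lam * (1 - lam)) * t) * laguerre m (1 / (lam * (1 - lam)) * t) *
        Real.exp (-(1 / (lam * (1 - lam)) * t))) := by
    intro t
    have he : Real.exp (-(1 / (lam * (1 - lam)) * t)) =
        Real.exp (-t / (1 - lam)) * Real.exp (-t / lam) := by
      rw [← Real.exp_add]
      congr 1
      field_simp
      ring
    have e1 : t / (lam * (1 - lam)) = 1 / (lam * (1 - lam)) * t := by ring
    have e2 : 1 / (lam * (1 - lam)) = 1 / (1 - lam) * (1 / lam) := by field_simp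
    simp only [piQuant, sub_sub_cancel]
    rw [he, mul_comm (1 - lam) lam, e1]
    generalize laguerre n _ = A
    generalize laguerre m _ = B
    rw [e2]
    ring
  simp_rw [hfun]
  rw [integral_const_mul, aux_laguerre n m hr]
  split_ifs with h
  · subst h
    rw [← mul_pow]
    have : -lam / (1 - lam) * (-(1 - lam) / lam) = 1 := by field_simp
    rw [this, one_pow]
    field_simp
  · simp
end

section
/- (The quantum expected energy equals the classical energy.) For every real λ with 0 < λ < 1/2 and every real μ ≥ 0, the series Σ_{n=0}^∞ (n+λ) · π_n^{(λ)}(μ) converges absolutely and its sum equals μ. -/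
lemma hasSum_of_eqs {f g : ℕ → ℝ} {a b : ℝ} (h : HasSum f a) (hf : ∀ n, g n = f n)
    (hb : b = a) : HasSum g b := by
  have : g = f := funext hf
  rw [this, hb]
  exact h

/-- Terms of the double series. -/
noncomputable def dblTerm (lam t y : ℝ) (p : ℕ × ℕ) : ℝ :=
  ((p.1 : ℝ) + p.2 + lam) * ((p.2 + p.1).choose p.1) * t ^ (p.1 + p.2) * y ^ p.1 / (p.1.factorial)

/-- Sum of the inner series. -/
noncomputable def innerSum (lam t y : ℝ) (j : ℕ) : ℝ :=
  (((j : ℝ) + 1) / (1 - t) ^ 2 + (lam - 1) / (1 - t)) * ((t * y / (1 - t)) ^ j / (j.factorial))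

lemma hasSum_inner (lam t y : ℝ) (ht : |t| < 1) (j : ℕ) :
    HasSum (fun m => dblTerm lam t y (j, m)) (innerSum lam t y j) := by
  have h1 := hasSum_choose_mul_geometric_of_norm_lt_one (𝕜 := ℝ) j (r := t) (by simpa using ht)
  have h2 := hasSum_choose_mul_geometric_of_norm_lt_one (𝕜 := ℝ) (j + 1) (r := t)
    (by simpa using ht)
  have h0 : (1 - t) ≠ 0 := by
    have := (abs_lt.1 ht).2
    linarith
  have h3 := ((h2.mul_left ((j : ℝ) + 1)).add (h1.mul_left (lam - 1))).mul_left
    (t ^ j * y ^ j / (j.factorial))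
  refine hasSum_of_eqs h3 ?_ ?_
  · intro m
    have hc : ((j : ℝ) + 1) * ((m + (j + 1)).choose (j + 1)) =
        ((m : ℝ) + j + 1) * ((m + j).choose j) := by
      have := Nat.add_one_mul_choose_eq (m + j) j
      rw [add_assoc] at this
      have h' : (((m + (j + 1) : ℕ) : ℝ)) * ((m + j).choose j) =
          ((m + (j + 1)).choose (j + 1)) * ((j + 1 : ℕ) : ℝ) := by exact_mod_cast this
      push_cast at h'
      linarith
    simp only [dblTerm]
    rw [← mul_assoc ((j : ℝ) + 1), hc]
    ring
  · simp only [innerSum, div_pow, mul_pow]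
    field_simp
    ring

lemma hasSum_outer (lam t y : ℝ) :
    HasSum (innerSum lam t y)
      (((t * y / (1 - t) + 1) / (1 - t) ^ 2 + (lam - 1) / (1 - t)) *
        Real.exp (t * y / (1 - t))) := by
  set z := t * y / (1 - t) with hz
  have h1 : HasSum (fun j : ℕ => z ^ j / (j.factorial : ℝ)) (Real.exp z) := by
    rw [Real.exp_eq_exp_ℝ]
    exact NormedSpace.expSeries_div_hasSum_exp z
  have h2 : HasSum (fun j : ℕ => (j : ℝ) * (z ^ j / (j.factorial : ℝ))) (z * Real.exp z) := by
    rw [← hasSum_nat_add_iff' 1]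
    simp only [Finset.range_one, Finset.sum_singleton, Nat.cast_zero, zero_mul, sub_zero]
    refine hasSum_of_eqs (h1.mul_left z) (fun j => ?_) rfl
    rw [Nat.factorial_succ]
    push_cast
    field_simp
    ring
  refine hasSum_of_eqs ((h2.mul_left (1 / (1 - t) ^ 2)).add
    (h1.mul_left (1 / (1 - t) ^ 2 + (lam - 1) / (1 - t)))) ?_ ?_
  · intro j
    simp only [innerSum, ← hz]
    ring
  · ring

lemma summable_dbl (lam t y : ℝ) (hl : 0 < lam) (ht : |t| < 1) :
    Summable (dblTerm lam t y) := by
  have habs : ∀ p, |dblTerm lam t y p| = dblTerm lam |t| |y| p := by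
    intro p
    simp only [dblTerm, abs_div, abs_mul, abs_pow, Nat.abs_cast]
    rw [abs_of_nonneg (a := (p.1 : ℝ) + p.2 + lam) (by positivity)]
  rw [← summable_abs_iff]
  simp only [habs]
  have ht' : |(|t|)| < 1 := by simpa using ht
  rw [summable_prod_of_nonneg]
  · refine ⟨fun j => (hasSum_inner lam |t| |y| ht' j).summable, ?_⟩
    simp only [(hasSum_inner lam |t| |y| ht' _).tsum_eq]
    exact (hasSum_outer lam |t| |y|).summable
  · intro p
    change 0 ≤ dblTerm lam |t| |y| p
    rw [← habs]
    exact abs_nonneg _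

lemma hasSum_dbl (lam t y : ℝ) (hl : 0 < lam) (ht : |t| < 1) :
    HasSum (dblTerm lam t y) (((t * y / (1 - t) + 1) / (1 - t) ^ 2 + (lam - 1) / (1 - t)) *
        Real.exp (t * y / (1 - t))) := by
  have hs := summable_dbl lam t y hl ht
  have := hs.hasSum.prod_fiberwise (hasSum_inner lam t y ht)
  rw [(hasSum_outer lam t y).unique this]
  exact hs.hasSum

lemma hasSum_laguerre (lam t x : ℝ) (hl : 0 < lam) (ht : |t| < 1) :
    HasSum (fun n : ℕ => ((n : ℝ) + lam) * (t ^ n * laguerre n x))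
      (((t * (-x) / (1 - t) + 1) / (1 - t) ^ 2 + (lam - 1) / (1 - t)) *
        Real.exp (t * (-x) / (1 - t))) := by
  have h := hasSum_dbl lam t (-x) hl ht
  rw [← (Finset.HasAntidiagonal.sigmaAntidiagonalEquivProd (A := ℕ)).hasSum_iff] at h
  have h2 := h.sigma (fun n => hasSum_fintype _)
  refine hasSum_of_eqs h2 (fun n => ?_) rfl
  simp only [Function.comp_apply, Finset.HasAntidiagonal.sigmaAntidiagonalEquivProd_apply]
  rw [Finset.sum_coe_sort (Finset.HasAntidiagonal.antidiagonal n) (dblTerm lam t (-x)),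
    Finset.Nat.sum_antidiagonal_eq_sum_range_succ_mk, laguerre, Finset.mul_sum, Finset.mul_sum]
  refine Finset.sum_congr rfl fun j hj => ?_
  have hj' : j ≤ n := by simpa [Nat.lt_succ_iff] using hj
  simp only [dblTerm]
  rw [Nat.sub_add_cancel hj', Nat.add_sub_cancel' hj', Nat.cast_sub hj', neg_pow x]
  ring

/-- The quantum expected energy equals the classical energy. -/
theorem piQuant_expected_energy (lam : ℝ) (hlam0 : 0 < lam) (hlam1 : lam < 1 / 2)
    (μ : ℝ) (hμ : 0 ≤ μ) :
    Summable (fun n : ℕ => |((n : ℝ) + lam) * piQuant lam n μ|) ∧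
      HasSum (fun n : ℕ => ((n : ℝ) + lam) * piQuant lam n μ) μ := by
  suffices h : HasSum (fun n : ℕ => ((n : ℝ) + lam) * piQuant lam n μ) μ from
    ⟨h.summable.abs, h⟩
  have h1 : 0 < 1 - lam := by linarith
  have ht : |-lam / (1 - lam)| < 1 := by
    rw [abs_div, abs_neg, abs_of_pos hlam0, abs_of_pos h1, div_lt_one h1]
    linarith
  have h := (hasSum_laguerre lam (-lam / (1 - lam)) (μ / (lam * (1 - lam))) hlam0 ht).mul_left
    (1 / (1 - lam) * Real.exp (-μ / (1 - lam)))
  have e1 : 1 - -lam / (1 - lam) = 1 / (1 - lam) := by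
    field_simp
    ring
  have e2 : -lam / (1 - lam) * (-(μ / (lam * (1 - lam)))) / (1 / (1 - lam)) = μ / (1 - lam) := by
    field_simp
  rw [e1, e2] at h
  have e3 : Real.exp (-μ / (1 - lam)) * Real.exp (μ / (1 - lam)) = 1 := by
    rw [← Real.exp_add, ← Real.exp_zero]
    congr 1
    ring
  refine hasSum_of_eqs h ?_ ?_
  · intro n
    simp only [piQuant]
    ring
  · calc μ = 1 / (1 - lam) * ((μ / (1 - lam) + 1) / (1 / (1 - lam)) ^ 2 +
          (lam - 1) / (1 / (1 - lam))) *
          (Real.exp (-μ / (1 - lam)) * Real.exp (μ / (1 - lam))) := by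
            rw [e3]
            field_simp
            ring
      _ = _ := by ring
end

section
/- (Closed form of the star exponential as a Fourier–Dirichlet series.) For every real λ with 0 < λ < 1/2, every real μ ≥ 0 and every real θ, the series Σ_{n=0}^∞ π_n^{(λ)}(μ) · e^{-i(n+λ)θ} converges absolutely and equals e^{-iλθ} / (1-λ+λe^{-iθ}) · exp( μ·(e^{-iθ}-1) / (1-λ+λe^{-iθ}) ), the denominator 1-λ+λe^{-iθ} being nonzero. -/
theorem hasSum_transfer {R : Type*} [NormedRing R] {f g : ℕ → R} {a b : R}
    (h : HasSum g b) (hf : ∀ n, f n = g n) (ha : a = b) : HasSum f a := by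
  rw [funext hf, ha]
  exact h

set_option maxHeartbeats 2000000 in
theorem laguerre_gen (x : ℝ) (t : ℂ) (ht : ‖t‖ < 1) :
    HasSum (fun n : ℕ => t ^ n * (laguerre n x : ℂ))
      (1 / (1 - t) * Complex.exp (-(t * x) / (1 - t))) := by
  have ht' : ‖(‖t‖ : ℝ)‖ < 1 := by simpa using ht
  have h1t : (1 - t) ≠ 0 := by
    intro h
    have : t = 1 := (sub_eq_zero.1 h).symm
    rw [this] at ht
    simp at ht
  have h1r : (1 - ‖t‖) ≠ 0 := by linarith
  let F : ℕ × ℕ → ℂ := fun p =>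
    ((-x : ℂ) ^ p.1 / (p.1.factorial : ℂ) * t ^ p.1) * (((p.2 + p.1).choose p.1 : ℂ) * t ^ p.2)
  have hin : ∀ j, HasSum (fun m => F (j, m))
      (((-x : ℂ) ^ j / (j.factorial : ℂ) * t ^ j) * (1 / (1 - t) ^ (j + 1))) := fun j =>
    (hasSum_choose_mul_geometric_of_norm_lt_one j ht).mul_left _
  have hnorm : ∀ j, HasSum (fun m => ‖F (j, m)‖)
      ((|x| ^ j / (j.factorial : ℝ) * ‖t‖ ^ j) * (1 / (1 - ‖t‖) ^ (j + 1))) := by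
    intro j
    have := (hasSum_choose_mul_geometric_of_norm_lt_one j ht').mul_left
      (|x| ^ j / (j.factorial : ℝ) * ‖t‖ ^ j)
    refine hasSum_transfer this (fun m => ?_) rfl
    simp [F]
  have hsum : Summable F := by
    apply Summable.of_norm
    rw [summable_prod_of_nonneg (fun _ => norm_nonneg _)]
    refine ⟨fun j => (hnorm j).summable, ?_⟩
    simp_rw [fun j => (hnorm j).tsum_eq]
    have := (Real.summable_pow_div_factorial (|x| * ‖t‖ / (1 - ‖t‖))).mul_left (1 / (1 - ‖t‖))
    refine this.congr fun j => ?_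
    rw [div_pow, mul_pow]
    field_simp
    ring
  have hS : HasSum F (1 / (1 - t) * Complex.exp (-(t * x) / (1 - t))) := by
    have h1 := hsum.hasSum.prod_fiberwise hin
    have h2 := (NormedSpace.expSeries_div_hasSum_exp (-(t * x) / (1 - t))).mul_left (1 / (1 - t))
    rw [← Complex.exp_eq_exp_ℂ] at h2
    have : ∑' p, F p = 1 / (1 - t) * Complex.exp (-(t * x) / (1 - t)) := by
      refine h1.unique ?_
      refine hasSum_transfer h2 (fun j => ?_) rfl
      rw [div_pow, neg_pow (t * (x : ℂ)), mul_pow, neg_pow (x : ℂ)]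
      field_simp
      ring
    rw [← this]
    exact hsum.hasSum
  have h3 := ((Finset.HasAntidiagonal.sigmaAntidiagonalEquivProd (A := ℕ)).hasSum_iff.2 hS).sigma
    (fun n => hasSum_fintype _)
  refine hasSum_transfer h3 (fun n => ?_) rfl
  change _ = ∑ c : Finset.HasAntidiagonal.antidiagonal n, F c
  rw [Finset.univ_eq_attach, Finset.sum_attach (Finset.HasAntidiagonal.antidiagonal n) (fun p => F p),
    Finset.Nat.sum_antidiagonal_eq_sum_range_succ_mk, laguerre]
  push_cast
  rw [Finset.mul_sum]
  refine Finset.sum_congr rfl fun j hj => ?_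
  have hj : j ≤ n := Nat.lt_succ_iff.1 (Finset.mem_range.1 hj)
  simp only [F]
  rw [Nat.sub_add_cancel hj, neg_pow (x : ℂ)]
  obtain ⟨k, rfl⟩ := Nat.exists_eq_add_of_le hj
  rw [Nat.add_sub_cancel_left, pow_add]
  ring

/-- Closed form of the star exponential as a Fourier–Dirichlet series. -/
theorem starExp_closed_form (lam : ℝ) (hlam0 : 0 < lam) (hlam1 : lam < 1 / 2)
    (μ : ℝ) (hμ : 0 ≤ μ) (θ : ℝ) :
    (1 - (lam : ℂ) + (lam : ℂ) * Complex.exp (-Complex.I * θ)) ≠ 0 ∧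
    Summable (fun n : ℕ =>
      ‖(piQuant lam n μ : ℂ) * Complex.exp (-Complex.I * ((n : ℂ) + lam) * θ)‖) ∧
    HasSum
      (fun n : ℕ => (piQuant lam n μ : ℂ) * Complex.exp (-Complex.I * ((n : ℂ) + lam) * θ))
      (Complex.exp (-Complex.I * lam * θ) /
          (1 - (lam : ℂ) + (lam : ℂ) * Complex.exp (-Complex.I * θ)) *
        Complex.exp ((μ : ℂ) * (Complex.exp (-Complex.I * θ) - 1) /
          (1 - (lam : ℂ) + (lam : ℂ) * Complex.exp (-Complex.I * θ)))) := by
  have hl : (0 : ℝ) < 1 - lam := by linarith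
  have hlc : (1 - (lam : ℂ)) ≠ 0 := by exact_mod_cast hl.ne'
  have hl0 : (lam : ℂ) ≠ 0 := by exact_mod_cast hlam0.ne'
  have hE : ‖Complex.exp (-Complex.I * θ)‖ = 1 := by
    rw [Complex.norm_exp]; simp
  have hexp : ∀ n : ℕ, Complex.exp (-Complex.I * ((n : ℂ) + lam) * θ)
      = Complex.exp (-Complex.I * θ) ^ n * Complex.exp (-Complex.I * lam * θ) := by
    intro n
    rw [← Complex.exp_nat_mul, ← Complex.exp_add]
    ring_nf
  generalize Complex.exp (-Complex.I * θ) = E at *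
  have ht : ‖(-(lam : ℂ) / (1 - lam)) * E‖ < 1 := by
    have : (-(lam : ℂ) / (1 - lam)) = ((-lam / (1 - lam) : ℝ) : ℂ) := by push_cast; rfl
    rw [norm_mul, hE, this, Complex.norm_real, Real.norm_eq_abs, abs_div, abs_neg,
      abs_of_pos hlam0, abs_of_pos hl, mul_one, div_lt_one hl]
    linarith
  have hden : 1 - (lam : ℂ) + lam * E ≠ 0 := by
    intro h
    have : (-(lam : ℂ) / (1 - lam)) * E = 1 := by
      field_simp
      linear_combination -h
    rw [this] at ht
    simp at ht
  have key := ((laguerre_gen (μ / (lam * (1 - lam))) _ ht).mul_left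
    (1 / (1 - (lam : ℂ)) * Complex.exp (-μ / (1 - lam)))).mul_right
      (Complex.exp (-Complex.I * lam * θ))
  have hS : HasSum
      (fun n : ℕ => (piQuant lam n μ : ℂ) * Complex.exp (-Complex.I * ((n : ℂ) + lam) * θ))
      (Complex.exp (-Complex.I * lam * θ) / (1 - (lam : ℂ) + (lam : ℂ) * E) *
        Complex.exp ((μ : ℂ) * (E - 1) / (1 - (lam : ℂ) + (lam : ℂ) * E))) := by
    refine hasSum_transfer key (fun n => ?_) ?_
    · rw [hexp, piQuant]
      push_cast
      rw [mul_pow]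
      ring
    · have e1 : 1 - -(lam : ℂ) / (1 - lam) * E = (1 - lam + lam * E) / (1 - lam) := by
        field_simp
        ring
      have e2 : (μ : ℂ) * (E - 1) / (1 - (lam : ℂ) + (lam : ℂ) * E) = -μ / (1 - lam) +
          -(-(lam : ℂ) / (1 - lam) * E * ((μ / (lam * (1 - lam)) : ℝ) : ℂ)) /
            (1 - -(lam : ℂ) / (1 - lam) * E) := by
        rw [e1]
        push_cast
        generalize hD : 1 - (lam : ℂ) + (lam : ℂ) * E = D at *
        field_simp
        rw [← hD]
        ring
      rw [e2, Complex.exp_add]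
      generalize Complex.exp (-(-(lam : ℂ) / (1 - lam) * E * ((μ / (lam * (1 - lam)) : ℝ) : ℂ)) /
            (1 - -(lam : ℂ) / (1 - lam) * E)) = A
      rw [e1]
      field_simp
  exact ⟨hden, hS.summable.norm, hS⟩
end

section
/- (Common phase-space integral of the idempotents of the normal quantization.) Let m, ω, ħ be positive reals and let H(q,p) = p²/(2m) + (mω²/2)·q². Then for every natural number n, the double integral over the (q,p)-plane ∬_{ℝ²} e^{-H(q,p)/(ħω)} · (H(q,p)/(ħω))^n / n! dq dp equals 2πħ. -/
open MeasureTheory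

lemma aux_scale (a b : ℝ) (ha : 0 < a) (hb : 0 < b) (f : ℝ × ℝ → ℝ) :
    ∫ z : ℝ × ℝ, f z = a * b * ∫ z : ℝ × ℝ, f (a * z.1, b * z.2) := by
  have h1 := Real.map_volume_mul_left ha.ne'
  have h2 := Real.map_volume_mul_left hb.ne'
  have h3 := Measure.map_prod_map (volume : Measure ℝ) (volume : Measure ℝ)
    (measurable_const_mul a) (measurable_const_mul b)
  have hme : MeasurableEmbedding (Prod.map (fun x : ℝ => a * x) (fun x : ℝ => b * x)) :=
    (measurableEmbedding_mulLeft₀ ha.ne').prodMap (measurableEmbedding_mulLeft₀ hb.ne')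
  have h4 := hme.integral_map (μ := (volume : Measure ℝ).prod volume) f
  rw [← h3, h1, h2, Measure.prod_smul_left, Measure.prod_smul_right, integral_smul_measure,
    integral_smul_measure, abs_of_pos (inv_pos.2 ha), abs_of_pos (inv_pos.2 hb),
    ENNReal.toReal_ofReal (inv_pos.2 ha).le, ENNReal.toReal_ofReal (inv_pos.2 hb).le] at h4
  change a⁻¹ • b⁻¹ • ∫ z : ℝ × ℝ, f z = ∫ z : ℝ × ℝ, f (a * z.1, b * z.2) at h4
  rw [← h4, smul_eq_mul, smul_eq_mul]
  field_simp

lemma aux_int (n : ℕ) :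
    ∫ z : ℝ × ℝ, Real.exp (-(z.1 ^ 2 + z.2 ^ 2)) * (z.1 ^ 2 + z.2 ^ 2) ^ n
      = Real.pi * n.factorial := by
  have h := Complex.integral_rpow_mul_exp_neg_rpow (p := 2) (q := 2 * n) (by norm_num)
    (by have : (0:ℝ) ≤ n := n.cast_nonneg
        linarith)
  rw [show ((2 * n + 2 : ℝ) / 2) = n + 1 by ring, Real.Gamma_nat_eq_factorial] at h
  rw [← Complex.volume_preserving_equiv_real_prod.integral_comp
    Complex.measurableEquivRealProd.measurableEmbedding]
  rw [show (2 * Real.pi / 2) = Real.pi by ring] at h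
  rw [← h]
  congr 1
  ext z
  have e : z.re ^ 2 + z.im ^ 2 = ‖z‖ ^ 2 := by
    rw [Complex.sq_norm, Complex.normSq_apply]; ring
  have e2 : ‖z‖ ^ (2 * n : ℝ) = (‖z‖ ^ 2) ^ n := by
    rw [← pow_mul, ← Real.rpow_natCast]; push_cast; rfl
  rw [e2, Real.rpow_two]
  simp only [Complex.measurableEquivRealProd_apply, e]
  ring

/-- The idempotents of the normal-form quantization of the simple harmonic oscillator
all have phase-space integral `2πħ`. -/
theorem normal_idempotent_phase_space_integral
    (m ω hbar : ℝ) (hm : 0 < m) (hω : 0 < ω) (hhbar : 0 < hbar)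
    (H : ℝ → ℝ → ℝ)
    (hH : ∀ q p : ℝ, H q p = p ^ 2 / (2 * m) + m * ω ^ 2 / 2 * q ^ 2) (n : ℕ) :
    ∫ qp : ℝ × ℝ,
        Real.exp (-(H qp.1 qp.2) / (hbar * ω)) * (H qp.1 qp.2 / (hbar * ω)) ^ n /
          (n.factorial : ℝ) =
      2 * Real.pi * hbar := by
  have hA : 0 < 2 * hbar / (m * ω) := by positivity
  have hB : 0 < 2 * m * hbar * ω := by positivity
  rw [integral_div, aux_scale _ _ (Real.sqrt_pos.2 hA) (Real.sqrt_pos.2 hB)]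
  have key : ∀ z : ℝ × ℝ, H (√(2 * hbar / (m * ω)) * z.1) (√(2 * m * hbar * ω) * z.2)
      / (hbar * ω) = z.1 ^ 2 + z.2 ^ 2 := by
    intro z
    rw [hH, mul_pow, mul_pow, Real.sq_sqrt hA.le, Real.sq_sqrt hB.le]
    field_simp
    ring
  simp only [neg_div, key]
  rw [aux_int, ← Real.sqrt_mul hA.le,
    show 2 * hbar / (m * ω) * (2 * m * hbar * ω) = (2 * hbar) ^ 2 by field_simp,
    Real.sqrt_sq (by positivity)]
  have : (n.factorial : ℝ) ≠ 0 := by positivity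
  field_simp
end

section
/- (The selection principle singles out the Groenewold–Moyal form.) Let λ be a real number with 0 < λ ≤ 1/2. If for every natural number k the inequality k·λ·(1-λ) < (k+1)·λ² holds (i.e., for every basic observable distribution the quantum variance is strictly less than the distribution variance), then λ = 1/2. -/
/-- The selection principle (quantization must decrease uncertainty) singles out
the Groenewold–Moyal form `λ = 1/2`. -/
theorem selection_principle_groenewold_moyal (lam : ℝ) (hlam0 : 0 < lam)
    (hlam1 : lam ≤ 1 / 2)
    (h : ∀ k : ℕ, (k : ℝ) * lam * (1 - lam) < ((k : ℝ) + 1) * lam ^ 2) :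
    lam = 1 / 2 := by
  by_contra hne
  have hlt : 0 < 1 - 2 * lam := by
    have := lt_of_le_of_ne hlam1 hne
    linarith
  obtain ⟨k, hk⟩ := exists_nat_gt (lam / (1 - 2 * lam))
  rw [div_lt_iff₀ hlt] at hk
  have h1 := h k
  have h2 := mul_lt_mul_of_pos_left hk hlam0
  nlinarith
end

section
/- (The obstruction cochain of a 2-cocycle is a 3-cocycle.) Let A be an associative algebra over a commutative ring and let C : A × A → A be a bilinear map satisfying the Hochschild 2-cocycle condition a·C(b,c) - C(ab,c) + C(a,bc) - C(a,b)·c = 0 for all a,b,c ∈ A. Define G(a,b,c) = C(C(a,b), c) - C(a, C(b,c)). Then G satisfies the Hochschild 3-cocycle condition: a·G(b,c,d) - G(ab,c,d) + G(a,bc,d) - G(a,b,cd) + G(a,b,c)·d = 0 for all a,b,c,d ∈ A. -/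
/-- The obstruction cochain `G(a,b,c) = C(C(a,b),c) - C(a,C(b,c))` of a Hochschild
2-cocycle `C` is a Hochschild 3-cocycle. -/
theorem obstruction_is_three_cocycle
    (R : Type*) [CommRing R] (A : Type*) [Ring A] [Algebra R A]
    (C : A →ₗ[R] A →ₗ[R] A)
    (hC : ∀ a b c : A, a * C b c - C (a * b) c + C a (b * c) - C a b * c = 0) :
    ∀ a b c d : A,
      a * (C (C b c) d - C b (C c d))
        - (C (C (a * b) c) d - C (a * b) (C c d))
        + (C (C a (b * c)) d - C a (C (b * c) d))
        - (C (C a b) (c * d) - C a (C b (c * d)))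
        + (C (C a b) c - C a (C b c)) * d = 0 := by
  intro a b c d
  have h1 := hC a (C b c) d
  have h2 := hC a b (C c d)
  have h3 := hC (C a b) c d
  have h4 := congrArg (fun x => C x d) (hC a b c)
  have h5 := congrArg (fun x => C a x) (hC b c d)
  simp only [map_add, map_sub, map_zero, LinearMap.add_apply, LinearMap.sub_apply,
    LinearMap.zero_apply] at h4 h5
  simp only [mul_sub, sub_mul]
  have h : ∀ x y z w t u : A, x = 0 → y = 0 → z = 0 → w = 0 → t = 0 →
      u = x - y - z + w + t → u = 0 := by
    rintro x y z w t u rfl rfl rfl rfl rfl rfl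
    simp
  refine h _ _ _ _ _ _ h1 h2 h3 h4 h5 ?_
  abel
end
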